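/- For all x ≥ 10^6, Δ(x)/log x − Δ̃(x) ≥ 1.23/(√x·(log x)²). -/

import Mathlib

open Filter

/-- `Δ(x) = ∑_{p ≤ x} log p / (p-1) - ∑_{n ≤ x} Λ(n)/n`. -/
noncomputable def Delta (x : ℝ) : ℝ :=
  (∑ p ∈ (Finset.range (⌊x⌋₊ + 1)).filter Nat.Prime, Real.log p / ((p : ℝ) - 1)) -
    ∑ n ∈ Finset.Icc 1 ⌊x⌋₊, ArithmeticFunction.vonMangoldt n / n

/-- `Δ̃(x) = ∑_{p ≤ x, a ≥ 1, p^a > x} 1/(a p^a)`. -/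
noncomputable def hDelta (x : ℝ) : ℝ :=
  ∑ p ∈ (Finset.range (⌊x⌋₊ + 1)).filter Nat.Prime,
    ∑' a : ℕ, if 1 ≤ a ∧ x < (p : ℝ) ^ a then 1 / (a * (p : ℝ) ^ a) else 0

/-!
Expanding `1 / (p - 1)` as a geometric series writes `Δ(x) / log x - Δ̃(x)` as the sum of
`(log p / log x - 1 / a) / p ^ a` over the pairs with `p ≤ x < p ^ a`. All terms are nonnegative, so
with `y = √x` the terms `a = 2` give the lower bound `∑ (log p - log y) / p ^ 2 / (2 log y)` over
the primes `y < p ≤ y ^ 2`.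

Put `u = p / y`. Since `1 / (1 + t) ≥ exp (-t)`, the summand is at least
`u ^ (-s) log u log p / (y ^ 2 log y)` with `s = 2 + 0.145`, because `0.145 log y ≥ 1`. Partial
summation of this weight only needs linear bounds on `θ`: an upper one where the weight increases
(`u ≤ exp (1 / s)`) and a lower one where it decreases. These are `0.9 x - 65 ≤ θ x ≤ 1.15 x`, from
Chebyshev's method with `⌊x⌋! ⌊x/30⌋! / (⌊x/2⌋! ⌊x/3⌋! ⌊x/5⌋!)` and Stirling's formula.
-/

section Development

open Finset Real
open ArithmeticFunction hiding log
open scoped Nat Chebyshev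

theorem sub_mul_log_le {a b : ℝ} (ha : 0 < a) (hb : 0 < b) :
    (b - a) * log a ≤ (b * log b - b) - (a * log a - a) := by
  have h : b * (log a - log b) ≤ b * (a / b - 1) := by
    rw [← log_div ha.ne' hb.ne']
    gcongr
    exact log_le_sub_one_of_pos (by positivity)
  rw [mul_sub b (a / b), mul_div_cancel₀ a hb.ne'] at h
  linarith

theorem log_le_div_add_log_sub_one {x a : ℝ} (hx : 0 < x) (ha : 0 < a) :
    log x ≤ x / a + log a - 1 := by
  have h := log_le_sub_one_of_pos (div_pos hx ha)
  rw [log_div hx.ne' ha.ne'] at h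
  linarith

theorem log_factorial_le_stirling {n : ℕ} (hn : n ≠ 0) :
    log n ! ≤ n * log n - n + log n / 2 + 1 := by
  obtain ⟨m, rfl⟩ := Nat.exists_eq_succ_of_ne_zero hn
  have h : log (Stirling.stirlingSeq (m + 1)) ≤ log (Stirling.stirlingSeq 1) :=
    Stirling.log_stirlingSeq'_antitone m.zero_le
  rw [Stirling.log_stirlingSeq_formula, Stirling.log_stirlingSeq_formula,
    log_mul two_ne_zero (by positivity), log_div (by positivity) (by positivity), log_exp] at h
  simp only [Nat.factorial_one, Nat.cast_one, log_one, mul_one, one_mul, one_div, log_inv,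
    log_exp] at h
  linarith

theorem log_factorial_floor_le {z : ℝ} (hz : 1 ≤ z) :
    log ⌊z⌋₊ ! ≤ z * log z - z + log z / 2 + 1 := by
  have hn : 1 ≤ ⌊z⌋₊ := (Nat.one_le_floor_iff z).2 hz
  have hn' : (1 : ℝ) ≤ ⌊z⌋₊ := by exact_mod_cast hn
  have hnz : (⌊z⌋₊ : ℝ) ≤ z := Nat.floor_le (by linarith)
  have hconv := sub_mul_log_le (a := ⌊z⌋₊) (b := z) (by linarith) (by linarith)
  have hpos : 0 ≤ (z - ⌊z⌋₊) * log ⌊z⌋₊ := mul_nonneg (by linarith) (log_nonneg hn')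
  have hlog : log ⌊z⌋₊ ≤ log z := log_le_log (by linarith) hnz
  linarith [log_factorial_le_stirling (n := ⌊z⌋₊) (by omega)]

theorem le_log_factorial_floor {z : ℝ} (hz : 2 ≤ z) :
    z * log z - z - log z / 2 + log (2 * π) / 2 ≤ log ⌊z⌋₊ ! := by
  have hz0 : 0 < z := by linarith
  have hzn : z < ⌊z⌋₊ + 1 := Nat.lt_floor_add_one z
  have hfac : log (⌊z⌋₊ + 1)! = log (⌊z⌋₊ + 1) + log ⌊z⌋₊ ! := by
    rw [Nat.factorial_succ, Nat.cast_mul, log_mul (by positivity) (by positivity), Nat.cast_succ]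
  have hstirling := Stirling.le_log_factorial_stirling (Nat.succ_ne_zero ⌊z⌋₊)
  rw [Nat.succ_eq_add_one, hfac, Nat.cast_succ] at hstirling
  generalize (⌊z⌋₊ : ℝ) + 1 = m at *
  have hm0 : 0 < m := hz0.trans hzn
  have hlog : log m - log z ≤ (m - z) / z := by
    rw [← log_div hm0.ne' hz0.ne', sub_div, div_self hz0.ne']
    exact log_le_sub_one_of_pos (by positivity)
  have hlogz : 1 / 2 ≤ log z := by
    linarith [log_two_gt_d9, log_le_log two_pos hz]
  have hslope : (m - z) / z ≤ 2 * ((m - z) * log z) := by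
    rw [div_le_iff₀ hz0]
    nlinarith [mul_nonneg (sub_nonneg.2 hzn.le) (by nlinarith : 0 ≤ 2 * log z * z - 1)]
  linarith [sub_mul_log_le hz0 hm0]

theorem log_factorial_eq_sum_vonMangoldt (n : ℕ) :
    log n ! = ∑ d ∈ Ioc 0 n, Λ d * (n / d : ℕ) := by
  rw [← sum_Ioc_mul_zeta_eq_sum, vonMangoldt_mul_zeta, ← prod_Ico_id_eq_factorial, Nat.cast_prod,
    log_prod fun i hi => Nat.cast_ne_zero.2 (Nat.one_le_iff_ne_zero.1 (mem_Ico.1 hi).1)]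
  rfl

theorem log_factorial_floor_div_eq_sum_vonMangoldt (x : ℝ) (k : ℕ) :
    log ⌊x / k⌋₊ ! = ∑ d ∈ Ioc 0 ⌊x⌋₊, Λ d * (⌊x⌋₊ / d / k : ℕ) := by
  rw [Nat.floor_div_natCast, log_factorial_eq_sum_vonMangoldt]
  simp only [Nat.div_div_eq_div_mul, mul_comm k]
  refine sum_subset (Ioc_subset_Ioc_right (Nat.div_le_self _ k)) fun d hd hd' => ?_
  have : ⌊x⌋₊ / (d * k) = 0 := by
    rw [mul_comm, ← Nat.div_div_eq_div_mul]
    exact Nat.div_eq_of_lt (by simp_all)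
  rw [this, Nat.cast_zero, mul_zero]

/-- Chebyshev's combination `log (⌊x⌋! ⌊x/30⌋! / (⌊x/2⌋! ⌊x/3⌋! ⌊x/5⌋!))`, which lies between
`ψ(x) - ψ(x/6)` and `ψ(x)`. -/
noncomputable def chebyshevComb (x : ℝ) : ℝ :=
  log ⌊x⌋₊ ! + log ⌊x / 30⌋₊ ! - log ⌊x / 2⌋₊ ! - log ⌊x / 3⌋₊ ! - log ⌊x / 5⌋₊ !

/-- The coefficient of `Λ d` in `chebyshevComb x`, as a function of `m = ⌊x / d⌋`. -/
def chebyshevCoeff (m : ℕ) : ℤ :=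
  m + (m / 30 : ℕ) - (m / 2 : ℕ) - (m / 3 : ℕ) - (m / 5 : ℕ)

theorem chebyshevCoeff_nonneg (m : ℕ) : 0 ≤ chebyshevCoeff m := by
  rw [chebyshevCoeff]
  omega

theorem chebyshevCoeff_le_one (m : ℕ) : chebyshevCoeff m ≤ 1 := by
  rw [chebyshevCoeff]
  omega

theorem chebyshevCoeff_eq_one {m : ℕ} (hm : 1 ≤ m) (hm' : m < 6) : chebyshevCoeff m = 1 := by
  rw [chebyshevCoeff]
  omega

theorem chebyshevComb_eq_sum (x : ℝ) :
    chebyshevComb x = ∑ d ∈ Ioc 0 ⌊x⌋₊, Λ d * chebyshevCoeff (⌊x⌋₊ / d) := by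
  have h2 := log_factorial_floor_div_eq_sum_vonMangoldt x 2
  have h3 := log_factorial_floor_div_eq_sum_vonMangoldt x 3
  have h5 := log_factorial_floor_div_eq_sum_vonMangoldt x 5
  have h30 := log_factorial_floor_div_eq_sum_vonMangoldt x 30
  simp only [Nat.cast_ofNat] at h2 h3 h5 h30
  rw [chebyshevComb, h2, h3, h5, h30, log_factorial_eq_sum_vonMangoldt]
  simp only [← sum_add_distrib, ← sum_sub_distrib]
  refine sum_congr rfl fun d _ => ?_
  simp only [chebyshevCoeff, Int.cast_sub, Int.cast_add, Int.cast_natCast]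
  ring

theorem chebyshevComb_le_psi (x : ℝ) : chebyshevComb x ≤ ψ x := by
  rw [chebyshevComb_eq_sum, Chebyshev.psi]
  refine sum_le_sum fun d _ => mul_le_of_le_one_right vonMangoldt_nonneg ?_
  exact_mod_cast chebyshevCoeff_le_one _

theorem psi_sub_psi_div_six_le_chebyshevComb {x : ℝ} (hx : 0 ≤ x) :
    ψ x - ψ (x / 6) ≤ chebyshevComb x := by
  have hsub : Ioc 0 ⌊x / 6⌋₊ ⊆ Ioc 0 ⌊x⌋₊ := Ioc_subset_Ioc_right (Nat.floor_mono (by linarith))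
  rw [chebyshevComb_eq_sum, Chebyshev.psi, Chebyshev.psi, ← sum_sdiff_eq_sub hsub]
  refine (sum_le_sum fun d hd => ?_).trans <| sum_le_sum_of_subset_of_nonneg sdiff_subset
    fun d _ _ => mul_nonneg vonMangoldt_nonneg (by exact_mod_cast chebyshevCoeff_nonneg _)
  have hfloor : ⌊x / 6⌋₊ = ⌊x⌋₊ / 6 := by exact_mod_cast Nat.floor_div_natCast x 6
  simp only [Finset.mem_sdiff, mem_Ioc, hfloor, not_and, not_le] at hd
  obtain ⟨⟨hd0, hdx⟩, hd6⟩ := hd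
  have hlt : ⌊x⌋₊ / d < 6 := by
    rw [Nat.div_lt_iff_lt_mul hd0]
    have := hd6 hd0
    omega
  rw [chebyshevCoeff_eq_one (Nat.div_pos hdx hd0) hlt, Int.cast_one, mul_one]

theorem log_two_mul_pi_gt : 1.8 < log (2 * π) := by
  have h : log (5 ^ 2 / 2 ^ 2) < log (2 * π) :=
    log_lt_log (by norm_num) (by linarith [pi_gt_d2])
  rw [log_div (by norm_num) (by norm_num), log_pow, log_pow, Nat.cast_ofNat] at h
  linarith [log_two_lt_d9, log_five_gt_d9]

theorem chebyshevComb_bounds {x : ℝ} (hx : 60 ≤ x) :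
    0.92129 * x - 5 / 2 * log x + 2 ≤ chebyshevComb x ∧
      chebyshevComb x ≤ 0.9213 * x + 5 / 2 * log x - 4 := by
  have hlog30 : log 30 = log 2 + log 3 + log 5 := by
    rw [← log_mul, ← log_mul] <;> norm_num
  have hlog : ∀ k : ℝ, 0 < k → log (x / k) = log x - log k := fun k hk =>
    log_div (by linarith) hk.ne'
  have hlog2pi := log_two_mul_pi_gt
  have upper := log_factorial_floor_le (show 1 ≤ x by linarith)
  have upper30 := log_factorial_floor_le (show 1 ≤ x / 30 by linarith)
  have upper2 := log_factorial_floor_le (show 1 ≤ x / 2 by linarith)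
  have upper3 := log_factorial_floor_le (show 1 ≤ x / 3 by linarith)
  have upper5 := log_factorial_floor_le (show 1 ≤ x / 5 by linarith)
  have lower := le_log_factorial_floor (show 2 ≤ x by linarith)
  have lower30 := le_log_factorial_floor (show 2 ≤ x / 30 by linarith)
  have lower2 := le_log_factorial_floor (show 2 ≤ x / 2 by linarith)
  have lower3 := le_log_factorial_floor (show 2 ≤ x / 3 by linarith)
  have lower5 := le_log_factorial_floor (show 2 ≤ x / 5 by linarith)
  rw [hlog _ (by norm_num)] at upper30 upper2 upper3 upper5 lower30 lower2 lower3 lower5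
  rw [hlog30] at upper30 lower30
  have := log_two_gt_d9
  have := log_two_lt_d9
  have := log_three_gt_d9
  have := log_three_lt_d9
  have := log_five_gt_d9
  have := log_five_lt_d9
  have hA : 0.92129 ≤ log 2 / 2 + log 3 / 3 + log 5 / 5 - (log 2 + log 3 + log 5) / 30 ∧
      log 2 / 2 + log 3 / 3 + log 5 / 5 - (log 2 + log 3 + log 5) / 30 ≤ 0.9213 := by
    constructor <;> linarith
  have hAx := mul_le_mul_of_nonneg_right hA.1 (by linarith : 0 ≤ x)
  have hxA := mul_le_mul_of_nonneg_right hA.2 (by linarith : 0 ≤ x)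
  rw [chebyshevComb]
  constructor <;> linarith

theorem lcmUpto_le_three_pow : ∀ n ≤ 300, Nat.lcmUpto n ≤ 3 ^ n := by
  decide +kernel

theorem psi_le_mul_of_le {x : ℝ} (hx0 : 0 ≤ x) (hx : x ≤ 300) : ψ x ≤ 1.15 * x := by
  have hfloor : (⌊x⌋₊ : ℝ) ≤ x := Nat.floor_le hx0
  have hn : ⌊x⌋₊ ≤ 300 := by exact_mod_cast hfloor.trans hx
  calc ψ x = log (Nat.lcmUpto ⌊x⌋₊) := by
        rw [Chebyshev.psi_eq_psi_coe_floor, Chebyshev.psi_eq_log_lcmUpto]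
    _ ≤ log (3 ^ ⌊x⌋₊) :=
        log_le_log (by exact_mod_cast Nat.lcmUpto_pos _)
          (by exact_mod_cast lcmUpto_le_three_pow _ hn)
    _ = ⌊x⌋₊ * log 3 := log_pow _ _
    _ ≤ x * 1.15 := by
        gcongr
        linarith [log_three_lt_d9]
    _ = 1.15 * x := mul_comm _ _

theorem psi_le_mul {x : ℝ} (hx : 0 ≤ x) : ψ x ≤ 1.15 * x := by
  obtain ⟨n, hn⟩ := exists_nat_ge x
  induction n using Nat.strong_induction_on generalizing x with
  | _ n ih =>
    rcases le_or_gt x 300 with hsmall | hlarge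
    · exact psi_le_mul_of_le hx hsmall
    have hn0 : 300 < n := by exact_mod_cast hlarge.trans_le hn
    have hrec : ψ (x / 6) ≤ 1.15 * (x / 6) := by
      refine ih (n - 1) (by omega) (by positivity) ?_
      rw [Nat.cast_sub (by omega), Nat.cast_one]
      linarith
    have hlog : log x ≤ x / 256 + 8 * log 2 - 1 := by
      have h := log_le_div_add_log_sub_one (x := x) (a := 2 ^ 8) (by linarith) (by norm_num)
      rw [log_pow] at h
      norm_num at h
      exact h
    linarith [psi_sub_psi_div_six_le_chebyshevComb hx, log_two_lt_d9,
      (chebyshevComb_bounds (x := x) (by linarith)).2]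

theorem rpow_inv_three_le {x : ℝ} (hx : 729 ≤ x) : x ^ (3 : ℝ)⁻¹ ≤ √x / 3 := by
  have hx0 : 0 ≤ x := by linarith
  have hcube : (x ^ (3 : ℝ)⁻¹) ^ 3 = x := by exact_mod_cast rpow_inv_natCast_pow hx0 three_ne_zero
  have hsq : √x ^ 2 = x := sq_sqrt hx0
  refine le_of_pow_le_pow_left₀ (n := 6) (by norm_num) (by positivity) ?_
  calc (x ^ (3 : ℝ)⁻¹) ^ 6 = ((x ^ (3 : ℝ)⁻¹) ^ 3) ^ 2 := by ring
    _ = x ^ 2 := by rw [hcube]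
    _ ≤ x ^ 3 / 729 := by nlinarith [sq_nonneg x]
    _ = (√x ^ 2) ^ 3 / 729 := by rw [hsq]
    _ = (√x / 3) ^ 6 := by ring

theorem psi_sub_theta_le {x : ℝ} (hx : 729 ≤ x) : ψ x - θ x ≤ 1.92 * √x := by
  have h2 : ψ (x ^ (2 : ℝ)⁻¹) ≤ 1.15 * √x := by
    rw [← one_div, ← sqrt_eq_rpow]
    exact psi_le_mul (sqrt_nonneg x)
  have h3 : ψ (x ^ (3 : ℝ)⁻¹) ≤ 1.15 * (√x / 3) := by
    grw [psi_le_mul (by positivity), rpow_inv_three_le hx]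
  have h5 : ψ (x ^ (5 : ℝ)⁻¹) ≤ ψ (x ^ (3 : ℝ)⁻¹) :=
    Chebyshev.psi_mono <| rpow_le_rpow_of_exponent_le (by linarith) (by norm_num)
  linarith [Chebyshev.psi_sub_theta_le_psi_add_psi_add_psi x, sqrt_nonneg x]

theorem mul_sub_le_theta {x : ℝ} (hx : 729 ≤ x) : 0.9 * x - 65 ≤ θ x := by
  have hs : 0 < √x := sqrt_pos.2 (by linarith)
  have hsx : √x ^ 2 = x := sq_sqrt (by linarith)
  have hlog : log x / 2 ≤ √x / 48 + log 48 - 1 := by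
    rw [← log_sqrt (by linarith)]
    exact log_le_div_add_log_sub_one hs (by norm_num)
  have hlog48 : log 48 = 4 * log 2 + log 3 := by
    rw [show (48 : ℝ) = 2 ^ 4 * 3 by norm_num, log_mul (by norm_num) (by norm_num), log_pow]
    norm_num
  have hψ := (chebyshevComb_bounds (x := x) (by linarith)).1.trans (chebyshevComb_le_psi x)
  nlinarith [sq_nonneg (√x - 48), psi_sub_theta_le hx, log_two_lt_d9, log_three_lt_d9]

theorem sum_vonMangoldt_mul_eq_sum_prime (n : ℕ) (f : ℕ → ℝ) :
    ∑ k ∈ Icc 1 n, Λ k * f k =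
      ∑ p ∈ (range (n + 1)).filter Nat.Prime, ∑ a ∈ Icc 1 (Nat.log p n), log p * f (p ^ a) := by
  rw [sum_sigma']
  symm
  refine sum_of_injOn (fun q : (_ : ℕ) × ℕ => q.1 ^ q.2) ?_ ?_ ?_ ?_
  · rintro ⟨p, a⟩ hpa ⟨q, b⟩ hqb (h : p ^ a = q ^ b)
    simp only [coe_sigma, Set.mem_sigma_iff, mem_coe, mem_filter, mem_Icc] at hpa hqb
    obtain ⟨a, rfl⟩ := Nat.exists_eq_add_of_le' hpa.2.1
    obtain ⟨b, rfl⟩ := Nat.exists_eq_add_of_le' hqb.2.1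
    obtain ⟨rfl, rfl⟩ := hpa.1.2.pow_inj hqb.1.2 h
    rfl
  · rintro ⟨p, a⟩ hpa
    simp only [coe_sigma, Set.mem_sigma_iff, mem_coe, mem_filter, mem_Icc, mem_range] at hpa ⊢
    refine ⟨Nat.one_le_pow _ _ hpa.1.2.pos, Nat.pow_le_of_le_log ?_ hpa.2.2⟩
    have := hpa.1.2.pos
    omega
  · intro k hk hk'
    rw [vonMangoldt_eq_zero_iff.2, zero_mul]
    rw [isPrimePow_nat_iff]
    rintro ⟨p, a, hp, ha, rfl⟩
    have hpn := (mem_Icc.1 hk).2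
    have hp_le : p ≤ p ^ a := Nat.le_self_pow ha.ne' p
    refine hk' ⟨⟨p, a⟩, ?_, rfl⟩
    simp only [coe_sigma, Set.mem_sigma_iff, mem_coe, mem_filter, mem_Icc, mem_range]
    exact ⟨⟨by omega, hp⟩, ha, Nat.le_log_of_pow_le hp.one_lt hpn⟩
  · rintro ⟨p, a⟩ hpa
    simp only [mem_sigma, mem_filter, mem_Icc] at hpa
    have ha : a ≠ 0 := by have := hpa.2.1; omega
    rw [vonMangoldt_apply_pow ha, vonMangoldt_apply_prime hpa.1.2]

theorem hasSum_ite_lt_geometric {r : ℝ} (hr0 : 0 ≤ r) (hr1 : r < 1) (n : ℕ) :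
    HasSum (fun a : ℕ => if n < a then r ^ a else 0) (r / (1 - r) - ∑ a ∈ Icc 1 n, r ^ a) := by
  have hhead : HasSum (fun a : ℕ => if n < a then 0 else r ^ a) (∑ a ∈ range (n + 1), r ^ a) := by
    have hterm : ∀ a ∈ range (n + 1), (if n < a then 0 else r ^ a) = r ^ a := fun a ha =>
      if_neg (mem_range_succ_iff.1 ha).not_gt
    rw [← sum_congr rfl hterm]
    exact hasSum_sum_of_ne_finset_zero fun a ha => if_pos (by simpa using ha)
  have hvalue : r / (1 - r) - ∑ a ∈ Icc 1 n, r ^ a = (1 - r)⁻¹ - ∑ a ∈ range (n + 1), r ^ a := by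
    have : 1 - r ≠ 0 := by linarith
    rw [range_eq_Ico, sum_eq_sum_Ico_succ_bot n.succ_pos, pow_zero, zero_add, ← sub_sub]
    congr 1
    field_simp
    ring
  rw [hvalue]
  refine ((hasSum_geometric_of_lt_one hr0 hr1).sub hhead).congr_fun fun a => ?_
  split_ifs <;> simp

theorem log_floor_lt_iff {p a : ℕ} (hp : 1 < p) {x : ℝ} (hx : 1 ≤ x) :
    Nat.log p ⌊x⌋₊ < a ↔ 1 ≤ a ∧ x < (p : ℝ) ^ a := by
  have hpow : Nat.log p ⌊x⌋₊ < a ↔ x < (p : ℝ) ^ a := by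
    rw [Nat.log_lt_iff_lt_pow hp (Nat.floor_pos.2 hx).ne', Nat.floor_lt (by linarith), Nat.cast_pow]
  rw [← hpow]
  omega

theorem hasSum_log_div_pow {p : ℕ} (hp : 1 < p) {x : ℝ} (hx : 1 ≤ x) :
    HasSum (fun a : ℕ => if 1 ≤ a ∧ x < (p : ℝ) ^ a then log p / (p : ℝ) ^ a else 0)
      (log p / (p - 1) - ∑ a ∈ Icc 1 (Nat.log p ⌊x⌋₊), log p / (p : ℝ) ^ a) := by
  have hp1 : (1 : ℝ) < p := by exact_mod_cast hp
  have hvalue : log p / (p - 1) - ∑ a ∈ Icc 1 (Nat.log p ⌊x⌋₊), log p / (p : ℝ) ^ a =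
      log p * ((p : ℝ)⁻¹ / (1 - (p : ℝ)⁻¹) - ∑ a ∈ Icc 1 (Nat.log p ⌊x⌋₊), (p : ℝ)⁻¹ ^ a) := by
    have : (p : ℝ) - 1 ≠ 0 := by linarith
    simp only [mul_sub, mul_sum, inv_pow, ← div_eq_mul_inv]
    congr 1
    field_simp
  rw [hvalue]
  refine ((hasSum_ite_lt_geometric (by positivity) (inv_lt_one_of_one_lt₀ hp1)
    (Nat.log p ⌊x⌋₊)).mul_left (log p)).congr_fun fun a => ?_
  simp only [log_floor_lt_iff hp hx, mul_ite, mul_zero, inv_pow, div_eq_mul_inv]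

theorem Delta_eq_sum_tsum {x : ℝ} (hx : 1 ≤ x) :
    Delta x = ∑ p ∈ (range (⌊x⌋₊ + 1)).filter Nat.Prime,
      ∑' a : ℕ, if 1 ≤ a ∧ x < (p : ℝ) ^ a then log p / (p : ℝ) ^ a else 0 := by
  simp only [Delta, div_eq_mul_inv (vonMangoldt _), sum_vonMangoldt_mul_eq_sum_prime ⌊x⌋₊ (·⁻¹)]
  rw [← sum_sub_distrib]
  refine sum_congr rfl fun p hp => ?_
  rw [(hasSum_log_div_pow (mem_filter.1 hp).2.one_lt hx).tsum_eq]
  simp only [Nat.cast_pow, div_eq_mul_inv]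

/-- The contribution of the pair `(p, a)` to `Δ(x) / log x - Δ̃(x)`, both terms being written as
sums over the pairs with `p ≤ x < p ^ a`. -/
noncomputable def excess (x : ℝ) (p a : ℕ) : ℝ :=
  if 1 ≤ a ∧ x < (p : ℝ) ^ a then (log p / log x - 1 / a) / (p : ℝ) ^ a else 0

theorem excess_nonneg {x : ℝ} (hx : 1 < x) (p a : ℕ) : 0 ≤ excess x p a := by
  rw [excess]
  split_ifs with h
  · have ha : (0 : ℝ) < a := by exact_mod_cast h.1
    have hlog : log x ≤ a * log p := by
      rw [← log_pow]
      exact log_le_log (by linarith) h.2.le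
    have : 1 / a ≤ log p / log x := by
      rw [div_le_div_iff₀ ha (log_pos hx)]
      linarith
    exact div_nonneg (by linarith) (by positivity)
  · rfl

theorem hasSum_excess {p : ℕ} (hp : 1 < p) {x : ℝ} (hx : 1 < x) :
    HasSum (excess x p)
      ((∑' a : ℕ, if 1 ≤ a ∧ x < (p : ℝ) ^ a then log p / (p : ℝ) ^ a else 0) / log x -
        ∑' a : ℕ, if 1 ≤ a ∧ x < (p : ℝ) ^ a then 1 / (a * (p : ℝ) ^ a) else 0) := by
  have hlog := (hasSum_log_div_pow hp hx.le).summable.hasSum.div_const (log x)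
  have hexcess (a : ℕ) : excess x p a =
      (if 1 ≤ a ∧ x < (p : ℝ) ^ a then log p / (p : ℝ) ^ a else 0) / log x -
        (if 1 ≤ a ∧ x < (p : ℝ) ^ a then 1 / (a * (p : ℝ) ^ a) else 0) := by
    rw [excess]
    split_ifs <;> ring
  have hsummable : Summable fun a : ℕ =>
      if 1 ≤ a ∧ x < (p : ℝ) ^ a then 1 / (a * (p : ℝ) ^ a) else 0 :=
    hlog.summable.of_nonneg_of_le (fun a => by split_ifs <;> positivity)
      fun a => by linarith [hexcess a, excess_nonneg hx p a]
  exact (hlog.sub hsummable.hasSum).congr_fun hexcess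

theorem sum_excess_two_le {x : ℝ} (hx : 1 < x) :
    ∑ p ∈ (range (⌊x⌋₊ + 1)).filter Nat.Prime, excess x p 2 ≤ Delta x / log x - hDelta x := by
  rw [Delta_eq_sum_tsum hx.le, hDelta, sum_div, ← sum_sub_distrib]
  exact sum_le_sum fun p hp =>
    le_hasSum (hasSum_excess (mem_filter.1 hp).2.one_lt hx) 2 fun a _ => excess_nonneg hx p a

theorem sum_log_sub_log_div_sq_le {y : ℝ} (hy : 1 < y) :
    (∑ p ∈ (Ioc ⌊y⌋₊ ⌊y ^ 2⌋₊).filter Nat.Prime, (log p - log y) / (p : ℝ) ^ 2) / (2 * log y) ≤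
      Delta (y ^ 2) / log (y ^ 2) - hDelta (y ^ 2) := by
  have hx : 1 < y ^ 2 := one_lt_pow₀ hy two_ne_zero
  have hl : 0 < log y := log_pos hy
  refine le_trans ?_ (sum_excess_two_le hx)
  rw [sum_div]
  refine (sum_le_sum fun p hp => ?_).trans <| sum_le_sum_of_subset_of_nonneg
    (filter_subset_filter _ fun p hp => ?_) fun p _ _ => excess_nonneg hx p 2
  · have hyp : y < p := (Nat.floor_lt (by linarith)).1 (mem_Ioc.1 (mem_filter.1 hp).1).1
    rw [excess, if_pos ⟨one_le_two, by gcongr⟩, log_pow]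
    refine le_of_eq ?_
    push_cast
    field_simp
  · simp only [mem_Ioc, mem_range] at hp ⊢
    omega

theorem sum_prime_mul_log_eq {a b : ℝ} {f f' : ℝ → ℝ} (ha : 0 ≤ a) (hab : a ≤ b)
    (hf : ∀ t ∈ Set.Icc a b, HasDerivAt f (f' t) t) (hf' : ContinuousOn f' (Set.Icc a b)) :
    ∑ p ∈ (Ioc ⌊a⌋₊ ⌊b⌋₊).filter Nat.Prime, f p * log p =
      f b * θ b - f a * θ a - ∫ t in a..b, f' t * θ t := by
  have hderiv : Set.EqOn (deriv f) f' (Set.Icc a b) := fun t ht => (hf t ht).deriv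
  have habel := sum_mul_eq_sub_sub_integral_mul (fun k : ℕ => if k.Prime then log k else 0) ha hab
    (fun t ht => (hf t ht).differentiableAt)
    (hf'.integrableOn_Icc.congr_fun hderiv.symm measurableSet_Icc)
  simp only [← sum_filter, mul_ite, mul_zero, ← Chebyshev.theta_eq_sum_Icc] at habel
  rw [habel, ← intervalIntegral.integral_of_le hab]
  congr 1
  refine intervalIntegral.integral_congr fun t ht => ?_
  rw [Set.uIcc_of_le hab] at ht
  simp only [hderiv ht]

theorem le_sum_prime_mul_log {a b c d : ℝ} {f f' F : ℝ → ℝ} (ha : 0 ≤ a) (hab : a ≤ b)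
    (hf : ∀ t ∈ Set.Icc a b, HasDerivAt f (f' t) t) (hf' : ContinuousOn f' (Set.Icc a b))
    (hF : ∀ t ∈ Set.Icc a b, HasDerivAt F (f t) t)
    (hθ : ∀ t ∈ Set.Icc a b, f' t * θ t ≤ f' t * (c * t + d)) :
    (f b * (θ b - (c * b + d)) + c * F b) - (f a * (θ a - (c * a + d)) + c * F a) ≤
      ∑ p ∈ (Ioc ⌊a⌋₊ ⌊b⌋₊).filter Nat.Prime, f p * log p := by
  have hu : Set.uIcc a b = Set.Icc a b := Set.uIcc_of_le hab
  have hint : IntervalIntegrable (fun t => f' t * (c * t + d)) MeasureTheory.volume a b :=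
    ContinuousOn.intervalIntegrable (hu ▸ hf'.mul (by fun_prop))
  have hcompare : ∫ t in a..b, f' t * θ t ≤ ∫ t in a..b, f' t * (c * t + d) :=
    intervalIntegral.integral_mono_on hab
      (Chebyshev.theta_mono.intervalIntegrable.continuousOn_mul (hu ▸ hf')) hint hθ
  have hprimitive : ∀ t ∈ Set.uIcc a b,
      HasDerivAt (fun t => f t * (c * t + d) - c * F t) (f' t * (c * t + d)) t := fun t ht => by
    rw [hu] at ht
    refine (((hf t ht).mul (((hasDerivAt_id t).const_mul c).add_const d)).sub
      ((hF t ht).const_mul c)).congr_deriv ?_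
    rw [id]
    ring
  rw [intervalIntegral.integral_eq_sub_of_hasDerivAt hprimitive hint] at hcompare
  rw [sum_prime_mul_log_eq ha hab hf hf']
  linarith

/-- The weight `u ^ (-s) * log u`. At `u = p / y`, for suitable `s > 2`, it is a minorant of
`(log p - log y) / (p ^ 2 * log p)` up to a constant factor; unlike the latter it has an elementary
primitive. -/
noncomputable def logWeight (s u : ℝ) : ℝ :=
  u ^ (-s) * log u

/-- A primitive of `logWeight s` for `s ≠ 1`, used to evaluate the integral in partial summation. -/
noncomputable def logWeightPrimitive (s u : ℝ) : ℝ :=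
  -(u ^ (1 - s) * (1 + (s - 1) * log u)) / (s - 1) ^ 2

theorem hasDerivAt_logWeight (s : ℝ) {u : ℝ} (hu : 0 < u) :
    HasDerivAt (logWeight s) (u ^ (-s - 1) * (1 - s * log u)) u := by
  refine ((hasDerivAt_rpow_const (Or.inl hu.ne')).mul (hasDerivAt_log hu.ne')).congr_deriv ?_
  rw [rpow_sub_one hu.ne']
  field_simp
  ring

theorem hasDerivAt_logWeightPrimitive {s u : ℝ} (hs : s ≠ 1) (hu : 0 < u) :
    HasDerivAt (logWeightPrimitive s) (logWeight s u) u := by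
  have hs' : s - 1 ≠ 0 := sub_ne_zero.2 hs
  have hpow : u ^ (1 - s) = u * u ^ (-s) := by
    rw [sub_eq_neg_add, rpow_add_one hu.ne', mul_comm]
  refine (((hasDerivAt_rpow_const (p := 1 - s) (Or.inl hu.ne')).mul
    (((hasDerivAt_log hu.ne').const_mul (s - 1)).const_add 1)).neg.div_const _).congr_deriv ?_
  rw [logWeight, sub_sub_cancel_left, hpow]
  field_simp
  ring

theorem logWeight_exp_inv {s : ℝ} (hs : s ≠ 0) : logWeight s (exp s⁻¹) = exp (-1) / s := by
  rw [logWeight, log_exp, ← exp_mul, mul_neg, inv_mul_cancel₀ hs, div_eq_mul_inv]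

theorem logWeightPrimitive_one (s : ℝ) : logWeightPrimitive s 1 = -1 / (s - 1) ^ 2 := by
  simp [logWeightPrimitive]

theorem logWeightPrimitive_exp_inv {s : ℝ} (hs : s ≠ 0) (hs1 : s ≠ 1) :
    logWeightPrimitive s (exp s⁻¹) - exp s⁻¹ * logWeight s (exp s⁻¹) =
      -(s * exp (s⁻¹ - 1)) / (s - 1) ^ 2 := by
  have hs' : s - 1 ≠ 0 := sub_ne_zero.2 hs1
  have hexp : exp s⁻¹ * exp (-1) = exp (s⁻¹ - 1) := by rw [← exp_add, sub_eq_add_neg]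
  rw [logWeight_exp_inv hs, ← mul_div_assoc, hexp, logWeightPrimitive, log_exp, ← exp_mul,
    mul_sub, mul_one, inv_mul_cancel₀ hs]
  field_simp
  ring

theorem le_sum_prime_logWeight_mul_log {s y a b c d : ℝ} (hs : s ≠ 1) (hy : 0 < y)
    (hya : y ≤ a) (hab : a ≤ b)
    (hθ : ∀ t ∈ Set.Icc a b, (1 - s * log (t / y)) * θ t ≤ (1 - s * log (t / y)) * (c * t + d)) :
    (logWeight s (b / y) * (θ b - (c * b + d)) + c * (y * logWeightPrimitive s (b / y))) -
        (logWeight s (a / y) * (θ a - (c * a + d)) + c * (y * logWeightPrimitive s (a / y))) ≤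
      ∑ p ∈ (Ioc ⌊a⌋₊ ⌊b⌋₊).filter Nat.Prime, logWeight s (p / y) * log p := by
  have hpos : ∀ t ∈ Set.Icc a b, 0 < t / y := fun t ht => by
    have := hy.trans_le (hya.trans ht.1)
    positivity
  have hscale (t : ℝ) : HasDerivAt (· / y) (1 / y) t := (hasDerivAt_id t).div_const y
  refine le_sum_prime_mul_log (f := fun t => logWeight s (t / y))
    (f' := fun t => (t / y) ^ (-s - 1) * (1 - s * log (t / y)) * (1 / y))
    (F := fun t => y * logWeightPrimitive s (t / y)) (by linarith) hab (fun t ht => ?_) ?_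
    (fun t ht => ?_) fun t ht => ?_
  · exact (hasDerivAt_logWeight s (hpos t ht)).comp t (hscale t)
  · have hne : ∀ t ∈ Set.Icc a b, t / y ≠ 0 := fun t ht => (hpos t ht).ne'
    have hcont : ContinuousOn (· / y) (Set.Icc a b) := by fun_prop
    exact ((hcont.rpow_const fun t ht => Or.inl (hne t ht)).mul
      (continuousOn_const.sub (continuousOn_const.mul (hcont.log hne)))).mul continuousOn_const
  · refine (((hasDerivAt_logWeightPrimitive hs (hpos t ht)).comp t (hscale t)).const_mul y
      ).congr_deriv ?_
    field_simp
  · have := mul_le_mul_of_nonneg_left (hθ t ht)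
      (mul_nonneg (rpow_nonneg (hpos t ht).le (-s - 1)) (one_div_pos.2 hy).le)
    linarith

theorem le_sum_prime_logWeight_mul_log_of_theta_bounds {s y z a b d : ℝ} (hs : 1 < s) (hy : 0 < y)
    (hz : y * exp s⁻¹ ≤ z) (hupper : ∀ t, y ≤ t → θ t ≤ b * t)
    (hlower : ∀ t, y ≤ t → a * t - d ≤ θ t) :
    y * ((b - (b - a) * s * exp (s⁻¹ - 1)) / (s - 1) ^ 2 + a * logWeightPrimitive s (z / y)) -
        d * (exp (-1) / s) ≤
      ∑ p ∈ (Ioc ⌊y⌋₊ ⌊z⌋₊).filter Nat.Prime, logWeight s (p / y) * log p := by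
  have hs0 : 0 < s := by linarith
  have hym : y ≤ y * exp s⁻¹ := le_mul_of_one_le_right hy.le (one_le_exp (by positivity))
  have hlog : ∀ t, y ≤ t → (s * log (t / y) ≤ 1 ↔ t ≤ y * exp s⁻¹) := fun t ht => by
    rw [mul_comm, ← le_div_iff₀ hs0, one_div, log_le_iff_le_exp (div_pos (hy.trans_le ht) hy),
      div_le_iff₀' hy]
  have hnear := le_sum_prime_logWeight_mul_log (c := b) (d := 0) hs.ne' hy le_rfl hym fun t ht =>
    mul_le_mul_of_nonneg_left (by linarith [hupper t ht.1])
      (sub_nonneg.2 ((hlog t ht.1).2 ht.2))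
  have hfar := le_sum_prime_logWeight_mul_log (c := a) (d := -d) hs.ne' hy hym hz fun t ht =>
    mul_le_mul_of_nonpos_left (by linarith [hlower t (hym.trans ht.1)]) <| by
      rcases ht.1.eq_or_lt with h | h
      · rw [← h, mul_div_cancel_left₀ _ hy.ne', log_exp, mul_inv_cancel₀ hs0.ne', sub_self]
      · linarith [lt_of_not_ge fun h' => ((hlog t (hym.trans ht.1)).1 h').not_gt h]
  have hend : 0 ≤ logWeight s (z / y) * (θ z - (a * z + -d)) := by
    have hyz : 1 ≤ z / y := (one_le_div hy).2 (hym.trans hz)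
    exact mul_nonneg (mul_nonneg (by positivity) (log_nonneg hyz))
      (by linarith [hlower z (hym.trans hz)])
  have hstart : logWeight s 1 = 0 := by rw [logWeight, log_one, mul_zero]
  rw [mul_div_cancel_left₀ _ hy.ne'] at hnear hfar
  rw [div_self hy.ne', hstart, logWeightPrimitive_one] at hnear
  have hpeak := congrArg (y * (b - a) * ·) (logWeightPrimitive_exp_inv hs0.ne' hs.ne')
  rw [logWeight_exp_inv hs0.ne'] at hnear hfar hpeak
  rw [sum_filter, ← sum_Ioc_consecutive _ (Nat.floor_mono hym) (Nat.floor_mono hz),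
    ← sum_filter, ← sum_filter]
  linear_combination hnear + hfar + hend - hpeak

theorem logWeight_mul_log_le {κ y p : ℝ} (hy : 1 < y) (hyp : y ≤ p) (hκ : 1 ≤ κ * log y) :
    logWeight (2 + κ) (p / y) * log p ≤ log y * y ^ 2 * ((log p - log y) / p ^ 2) := by
  have hy0 : 0 < y := by linarith
  obtain ⟨u, rfl⟩ : ∃ u, p = u * y := ⟨p / y, by field_simp⟩
  have hu1 : 1 ≤ u := le_of_mul_le_mul_right (by linarith) hy0
  have hu0 : 0 < u := by linarith
  have hv : 0 ≤ log u := log_nonneg hu1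
  have hdecay : u ^ (-κ) * (log u + log y) ≤ log y := by
    rw [rpow_neg hu0.le, inv_mul_le_iff₀ (by positivity), rpow_def_of_pos hu0]
    nlinarith [add_one_le_exp (log u * κ), log_pos hy]
  have hpow : u ^ (-(2 + κ)) = u ^ (-κ) / u ^ 2 := by
    rw [neg_add_rev, ← sub_eq_add_neg, rpow_sub hu0, rpow_two]
  rw [logWeight, mul_div_cancel_right₀ _ hy0.ne', log_mul hu0.ne' hy0.ne', add_sub_cancel_right,
    hpow]
  calc u ^ (-κ) / u ^ 2 * log u * (log u + log y)
      = log u / u ^ 2 * (u ^ (-κ) * (log u + log y)) := by ring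
    _ ≤ log u / u ^ 2 * log y := by gcongr
    _ = log y * y ^ 2 * (log u / (u * y) ^ 2) := by field_simp

theorem log_thousand_bounds : 6.907 < log 1000 ∧ log 1000 < 6.908 := by
  have h : log 1000 = 3 * (log 2 + log 5) := by
    rw [← log_mul (by norm_num) (by norm_num), show (1000 : ℝ) = (2 * 5) ^ 3 by norm_num, log_pow]
    norm_num
  constructor <;> linarith [log_two_gt_d9, log_two_lt_d9, log_five_gt_d9, log_five_lt_d9]

theorem neg_le_logWeightPrimitive {s y : ℝ} (hs : 2 ≤ s) (hy : 1 ≤ y) :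
    -((1 + (s - 1) * log y) / y) / (s - 1) ^ 2 ≤ logWeightPrimitive s y := by
  have hpow : y ^ (1 - s) ≤ y⁻¹ := by
    rw [← rpow_neg_one]
    exact rpow_le_rpow_of_exponent_le hy (by linarith)
  have hlog : 0 ≤ 1 + (s - 1) * log y := by
    have := mul_nonneg (by linarith : 0 ≤ s - 1) (log_nonneg hy)
    linarith
  rw [logWeightPrimitive, div_eq_inv_mul _ y]
  gcongr

theorem exp_inv_sub_one_le : exp ((2.145 : ℝ)⁻¹ - 1) ≤ 0.5877 := by
  have hquad : 1.7016 ≤ exp (1 - (2.145 : ℝ)⁻¹) := by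
    refine le_trans ?_ (sum_le_exp_of_nonneg (by norm_num) 4)
    norm_num [sum_range_succ, Nat.factorial]
  rw [← neg_sub, exp_neg]
  exact inv_le_of_inv_le₀ (by norm_num) (le_trans (by norm_num) hquad)

theorem le_sum_prime_logWeight_sq {y : ℝ} (hy : 1000 ≤ y) :
    0.615 * y ≤
      ∑ p ∈ (Ioc ⌊y⌋₊ ⌊y ^ 2⌋₊).filter Nat.Prime, logWeight 2.145 (p / y) * log p := by
  have hy0 : 0 < y := by linarith
  have hpeak : exp (2.145 : ℝ)⁻¹ ≤ y := by
    refine (exp_le_exp.2 (by norm_num : (2.145 : ℝ)⁻¹ ≤ 1)).trans ?_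
    linarith [exp_one_lt_d9]
  have hmain := le_sum_prime_logWeight_mul_log_of_theta_bounds (s := 2.145) (z := y ^ 2) (a := 0.9)
    (b := 1.15) (d := 65) (by norm_num) hy0 (by nlinarith)
    (fun t ht => (Chebyshev.theta_le_psi t).trans (psi_le_mul (by linarith)))
    (fun t ht => mul_sub_le_theta (by linarith))
  rw [sq y, mul_div_cancel_left₀ _ hy0.ne', ← sq y] at hmain
  have htail : -0.007 ≤ logWeightPrimitive 2.145 y := by
    refine le_trans ?_ (neg_le_logWeightPrimitive (by norm_num) (by linarith))
    have hlog := log_le_div_add_log_sub_one hy0 (show (0 : ℝ) < 1000 by norm_num)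
    have : (1 + (2.145 - 1) * log y) / y ≤ 0.009 := by
      rw [div_le_iff₀ hy0]
      linarith [log_thousand_bounds.2]
    norm_num at this ⊢
    linarith
  have hexp : exp (-1) / 2.145 ≤ 0.172 := by
    rw [div_le_iff₀ (by norm_num)]
    exact exp_neg_one_lt_d9.le.trans (by norm_num)
  have hconst : 0.63 ≤ (1.15 - (1.15 - 0.9) * 2.145 * exp ((2.145 : ℝ)⁻¹ - 1)) / (2.145 - 1) ^ 2 +
      0.9 * logWeightPrimitive 2.145 y := by
    rw [← sub_le_iff_le_add, le_div_iff₀ (by norm_num)]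
    linarith [exp_inv_sub_one_le]
  refine le_trans ?_ hmain
  grw [← hconst, hexp]
  linarith

theorem le_sum_log_sub_log_div_sq {y : ℝ} (hy : 1000 ≤ y) :
    0.615 / (y * log y) ≤
      ∑ p ∈ (Ioc ⌊y⌋₊ ⌊y ^ 2⌋₊).filter Nat.Prime, (log p - log y) / (p : ℝ) ^ 2 := by
  have hlog : 6.907 < log y :=
    log_thousand_bounds.1.trans_le (log_le_log (by norm_num) hy)
  have hweight : ∑ p ∈ (Ioc ⌊y⌋₊ ⌊y ^ 2⌋₊).filter Nat.Prime, logWeight 2.145 (p / y) * log p ≤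
      log y * y ^ 2 *
        ∑ p ∈ (Ioc ⌊y⌋₊ ⌊y ^ 2⌋₊).filter Nat.Prime, (log p - log y) / (p : ℝ) ^ 2 := by
    rw [mul_sum]
    refine sum_le_sum fun p hp => ?_
    have hyp : y < p := (Nat.floor_lt (by linarith)).1 (mem_Ioc.1 (mem_filter.1 hp).1).1
    rw [show (2.145 : ℝ) = 2 + 0.145 by norm_num]
    exact logWeight_mul_log_le (by linarith) hyp.le (by linarith)
  have h := (le_sum_prime_logWeight_sq hy).trans hweight
  rw [div_le_iff₀ (by positivity)]
  refine le_of_mul_le_mul_right ?_ (show 0 < y by linarith)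
  linarith

end Development

/-- `Δ(x)/log x - Δ̃(x) ≥ 1.23/(√x (log x)^2)` for `x ≥ 10^6`. -/
theorem Delta_div_log_sub_hDelta_lower (x : ℝ) (hx : (10 : ℝ) ^ 6 ≤ x) :
    1.23 / (Real.sqrt x * (Real.log x) ^ 2) ≤ Delta x / Real.log x - hDelta x := by
  obtain ⟨y, hy, rfl⟩ : ∃ y : ℝ, 1000 ≤ y ∧ y ^ 2 = x :=
    ⟨√x, Real.le_sqrt_of_sq_le (by linarith), Real.sq_sqrt (by linarith)⟩
  have hlog : 0 < Real.log y := Real.log_pos (by linarith)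
  calc 1.23 / (√(y ^ 2) * Real.log (y ^ 2) ^ 2) = 0.615 / (y * Real.log y) / (2 * Real.log y) := by
        rw [Real.sqrt_sq (by linarith), Real.log_pow]
        field_simp
        norm_num
    _ ≤ (∑ p ∈ (Finset.Ioc ⌊y⌋₊ ⌊y ^ 2⌋₊).filter Nat.Prime,
          (Real.log p - Real.log y) / (p : ℝ) ^ 2) / (2 * Real.log y) := by
        gcongr
        exact le_sum_log_sub_log_div_sq hy
    _ ≤ Delta (y ^ 2) / Real.log (y ^ 2) - hDelta (y ^ 2) :=
        sum_log_sub_log_div_sq_le (by linarith)
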